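/- arXiv:2605.17411 — 3 statements merged into one kernel-verified Lean document; each statement's English description precedes it below -/
import Mathlib

section
/- Assume the Continuum Hypothesis. Then for every Schur subset A of ℤ there exists a free Schur ultrafilter u on ℤ such that A ∈ u and u is a P-point. In particular, under CH there exists a free Schur ultrafilter on ℤ that is a P-point. -/
/-- An ultrafilter is *free* if it contains no finite set. -/
def IsFreeUltrafilter {X : Type*} (u : Ultrafilter X) : Prop :=
  ∀ A ∈ u, ¬ A.Finite

/-- An ultrafilter `u` on an additive semigroup is *Schur* if for each `U ∈ u`
there exist `a, b ∈ U` with `a + b ∈ U`. -/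
def IsSchurUltrafilter {S : Type*} [Add S] (u : Ultrafilter S) : Prop :=
  ∀ U ∈ u, ∃ a ∈ U, ∃ b ∈ U, a + b ∈ U

/-- An ultrafilter `u` on a countable set is a *P-point* if for every countable
family `{U n : n ∈ ℕ} ⊆ u` there exists `U ∈ u` with `U \ U n` finite for all `n`. -/
def IsPPoint {X : Type*} (u : Ultrafilter X) : Prop :=
  ∀ f : ℕ → Set X, (∀ n, f n ∈ u) → ∃ U ∈ u, ∀ n, (U \ f n).Finite

/-- A subset `A` of a commutative group `G` is *Schur* if for every `r, k : ℕ` there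
is a finite subset `X ⊆ A` such that for every `r`-coloring there exist `a ∈ X` and a
`k`-element subset `B ⊆ X` with `a + B ⊆ X` such that the coloring is constant on
`{a} ∪ B ∪ (a + B)`. -/
def IsSchurSet {G : Type*} [AddCommGroup G] (A : Set G) : Prop :=
  ∀ r k : ℕ, ∃ X : Finset G, (X : Set G) ⊆ A ∧
    ∀ c : G → Fin r, ∃ a ∈ X, ∃ B : Finset G,
      B ⊆ X ∧ B.card = k ∧ (∀ b ∈ B, a + b ∈ X) ∧
      (∀ b ∈ B, c b = c a) ∧ (∀ b ∈ B, c (a + b) = c a)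

/-! The Schur sets form a superset-closed, partition regular family all of whose members are
infinite, and every decreasing sequence of Schur sets has a Schur pseudo-intersection: collect
finite witnesses for all pairs `(r, k)`, the `n`-th one from the `n`-th set. Such a family carries
P-points as soon as there are at most `ℵ₁` subsets to consider: enumerate them along `ω₁` and build
an almost decreasing tower in the family whose `x`-th member decides the `x`-th subset. Each initial
segment is countable, so pseudo-intersections carry the recursion through every stage; and since
countably many indices are bounded in `ω₁`, the tower generates a P-point.

The whole group is Schur because the free ultrafilters on it form a compact semigroup, which
contains an idempotent; compactness of the space of colorings supplies the finite witnesses. -/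

open Set Filter

section Generalities

theorem eventuallyLE_cofinite_iff_finite_diff {X : Type*} {s t : Set X} :
    s ≤ᶠ[cofinite] t ↔ (s \ t).Finite := by
  rw [set_eventuallyLE_iff_mem_inf_principal, mem_inf_principal, mem_cofinite]
  simp only [compl_ofPred, Classical.not_imp, sdiff_eq, inter_def, mem_compl_iff]

theorem exists_forall_domRestrict_Iio {α β : Type*} [Preorder α] [WellFoundedLT α] [Nonempty β]
    {P : ∀ x : α, (Iio x → β) → β → Prop}
    (hP : ∀ x (f : α → β), (∀ y < x, P y ((Iio y).domRestrict f) (f y)) →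
      ∃ b, P x ((Iio x).domRestrict f) b) :
    ∃ f : α → β, ∀ x, P x ((Iio x).domRestrict f) (f x) := by
  let f : α → β := wellFounded_lt.fix fun x g => Classical.epsilon (P x fun y => g y y.2)
  refine ⟨f, fun x => ?_⟩
  induction x using WellFoundedLT.induction with
  | ind x ih =>
    have f_eq : f x = Classical.epsilon (P x ((Iio x).domRestrict f)) := wellFounded_lt.fix_eq _ x
    rw [f_eq]
    exact Classical.epsilon_spec (hP x f ih)

theorem bddAbove_range_of_countable_Iio {α ι : Type*} [LinearOrder α] [Uncountable α] [Countable ι]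
    (hα : ∀ x : α, (Iio x).Countable) (g : ι → α) : BddAbove (range g) := by
  by_contra hg
  refine not_countable_univ ((countable_iUnion fun i => hα (g i)).mono fun x _ => ?_)
  obtain ⟨_, ⟨i, rfl⟩, hi⟩ := not_bddAbove_iff.1 hg x
  exact mem_iUnion.2 ⟨i, hi⟩

theorem exists_ultrafilter_of_almost_decreasing {α X : Type*} [Preorder α] [IsDirectedOrder α]
    [Nonempty α] {T : α → Set X} (hT_inf : ∀ x, (T x).Infinite)
    (hT : ∀ ⦃x y⦄, x ≤ y → T y ≤ᶠ[cofinite] T x) :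
    ∃ u : Ultrafilter X, ∀ x B, T x ≤ᶠ[cofinite] B → B ∈ u := by
  let F (x : α) : Filter X := cofinite ⊓ 𝓟 (T x)
  have F_directed : Directed (· ≥ ·) F := directed_of_isDirected_le fun x y hxy =>
    set_eventuallyLE_iff_inf_principal_le.1 (hT hxy)
  have F_neBot (x : α) : (F x).NeBot := (hT_inf x).cofinite_inf_principal_neBot
  have : (⨅ x, F x).NeBot := iInf_neBot_of_directed' F_directed F_neBot
  exact ⟨.of (⨅ x, F x), fun x B hB => Ultrafilter.of_le _
    (mem_iInf_of_mem x (set_eventuallyLE_iff_mem_inf_principal.1 hB))⟩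

theorem exists_finite_subfamily_monochromatic {X κ : Type*} [Finite κ] {𝓕 : Set (Finset X)}
    (h𝓕 : ∀ c : X → κ, ∃ F ∈ 𝓕, ∃ i, (F : Set X) ⊆ c ⁻¹' {i}) :
    ∃ 𝓣 ⊆ 𝓕, 𝓣.Finite ∧ ∀ c : X → κ, ∃ F ∈ 𝓣, ∃ i, (F : Set X) ⊆ c ⁻¹' {i} := by
  let : TopologicalSpace κ := ⊥
  have : DiscreteTopology κ := ⟨rfl⟩
  let V (F : Finset X) : Set (X → κ) := ⋃ i, ⋂ x ∈ F, (fun c => c x) ⁻¹' {i}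
  have mem_V (F : Finset X) (c : X → κ) : c ∈ V F ↔ ∃ i, (F : Set X) ⊆ c ⁻¹' {i} := by
    simp only [V, mem_iUnion, mem_iInter]
    rfl
  have isOpen_V (F : Finset X) : IsOpen (V F) :=
    isOpen_iUnion fun i => isOpen_biInter_finset fun x _ =>
      (isOpen_discrete {i}).preimage (continuous_apply x)
  obtain ⟨𝓣, h𝓣, h𝓣_fin, hcover⟩ := isCompact_univ.elim_finite_subcover_image
    (fun F _ => isOpen_V F) fun c _ => by
      obtain ⟨F, hF, hc⟩ := h𝓕 c
      exact mem_biUnion hF ((mem_V F c).2 hc)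
  refine ⟨𝓣, h𝓣, h𝓣_fin, fun c => ?_⟩
  obtain ⟨F, hF, hc⟩ := mem_iUnion₂.1 (hcover (mem_univ c))
  exact ⟨F, hF, (mem_V F c).1 hc⟩

universe u v

open Cardinal in
theorem mk_set_le_aleph_one_of_CH {X : Type u} [Countable X]
    (hCH : continuum.{v} = ℵ₁) :
    #(Set X) ≤ ℵ₁ := by
  have hCH_lift : continuum.{u} = ℵ₁ := by
    apply lift_injective.{v, u}
    simpa using congrArg lift.{u, v} hCH
  rw [mk_set, ← hCH_lift, ← two_power_aleph0]
  exact power_le_power_left two_ne_zero mk_le_aleph0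

end Generalities

/-- A *P-coideal* of infinite subsets of `X`: the complement of an ideal containing the finite sets,
such that decreasing sequences have pseudo-intersections in it. Closure under supersets is the case
`B = C` of `mem_or_mem`. -/
structure IsPCoideal {X : Type*} (𝒮 : Set (Set X)) : Prop where
  infinite : ∀ ⦃A⦄, A ∈ 𝒮 → A.Infinite
  mem_or_mem : ∀ ⦃A B C⦄, A ∈ 𝒮 → A ⊆ B ∪ C → B ∈ 𝒮 ∨ C ∈ 𝒮
  exists_pseudointersection : ∀ ⦃D : ℕ → Set X⦄, Antitone D → (∀ n, D n ∈ 𝒮) →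
    ∃ S ∈ 𝒮, ∀ n, S ≤ᶠ[cofinite] D n

namespace IsPCoideal

variable {X : Type*} {𝒮 : Set (Set X)} {A B : Set X}

theorem mem_of_eventuallyLE (h𝒮 : IsPCoideal 𝒮) (hA : A ∈ 𝒮) (hAB : A ≤ᶠ[cofinite] B) : B ∈ 𝒮 :=
  (h𝒮.mem_or_mem hA (union_sdiff_self.symm ▸ subset_union_right)).resolve_right fun hdiff =>
    h𝒮.infinite hdiff (eventuallyLE_cofinite_iff_finite_diff.1 hAB)

theorem mem_of_subset (h𝒮 : IsPCoideal 𝒮) (hA : A ∈ 𝒮) (hAB : A ⊆ B) : B ∈ 𝒮 :=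
  h𝒮.mem_of_eventuallyLE hA hAB.eventuallyLE

theorem exists_subset_or_subset_compl (h𝒮 : IsPCoideal 𝒮) (hA : A ∈ 𝒮) (E : Set X) :
    ∃ S ∈ 𝒮, S ⊆ A ∧ (S ⊆ E ∨ S ⊆ Eᶜ) := by
  rcases h𝒮.mem_or_mem hA (inter_union_compl A E).ge with hE | hE
  · exact ⟨A ∩ E, hE, inter_subset_left, .inl inter_subset_right⟩
  · exact ⟨A ∩ Eᶜ, hE, inter_subset_left, .inr inter_subset_right⟩

theorem exists_pseudointersection_of_directed (h𝒮 : IsPCoideal 𝒮) {ι : Type*} [Countable ι]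
    [Nonempty ι] {D : ι → Set X} (hD : ∀ i, D i ∈ 𝒮)
    (hdir : Directed (fun s t => t ≤ᶠ[cofinite] s) D) :
    ∃ S ∈ 𝒮, ∀ i, S ≤ᶠ[cofinite] D i := by
  obtain ⟨f, hf⟩ := exists_surjective_nat ι
  have : IsTrans (Set X) fun s t => t ≤ᶠ[cofinite] s := ⟨fun _ _ _ hst htu => htu.trans hst⟩
  have dissipate_mem (n : ℕ) : dissipate (D ∘ f) n ∈ 𝒮 := by
    obtain ⟨i, hi⟩ := hdir.finite_set_le ((finite_Iic n).image f)
    refine h𝒮.mem_of_eventuallyLE (hD i) ?_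
    have hall : ∀ᶠ x in cofinite, ∀ m ∈ Iic n, x ∈ D i → x ∈ D (f m) :=
      (eventually_all_finite (finite_Iic n)).2 fun m hm => hi (f m) (mem_image_of_mem f hm)
    filter_upwards [hall] with x hx hxi
    exact mem_dissipate.2 fun m hm => hx m hm hxi
  obtain ⟨S, hS, hSD⟩ := h𝒮.exists_pseudointersection antitone_dissipate dissipate_mem
  exact ⟨S, hS, hf.forall.2 fun n => (hSD n).trans (dissipate_subset le_rfl).eventuallyLE⟩

theorem exists_deciding_pseudointersection (h𝒮 : IsPCoideal 𝒮) (hA : A ∈ 𝒮) {ι : Type*}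
    [Countable ι] {D : ι → Set X} (hD : ∀ i, D i ∈ 𝒮) (hDA : ∀ i, D i ≤ᶠ[cofinite] A)
    (hdir : Directed (fun s t => t ≤ᶠ[cofinite] s) D) (E : Set X) :
    ∃ S ∈ 𝒮, S ≤ᶠ[cofinite] A ∧ (∀ i, S ≤ᶠ[cofinite] D i) ∧ (S ⊆ E ∨ S ⊆ Eᶜ) := by
  obtain ⟨R, hR, hRA, hRD⟩ : ∃ R ∈ 𝒮, R ≤ᶠ[cofinite] A ∧ ∀ i, R ≤ᶠ[cofinite] D i := by
    rcases isEmpty_or_nonempty ι with hι | ⟨⟨i⟩⟩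
    · exact ⟨A, hA, .rfl, hι.elim⟩
    · have : Nonempty ι := ⟨i⟩
      obtain ⟨R, hR, hRD⟩ := h𝒮.exists_pseudointersection_of_directed hD hdir
      exact ⟨R, hR, (hRD i).trans (hDA i), hRD⟩
  obtain ⟨S, hS, hSR, hSE⟩ := h𝒮.exists_subset_or_subset_compl hR E
  exact ⟨S, hS, hSR.eventuallyLE.trans hRA, fun i => hSR.eventuallyLE.trans (hRD i), hSE⟩

section Tower

variable {α : Type*} [LinearOrder α]

/-- An almost decreasing family of members of `𝒮`, all almost contained in `A`, whose `x`-th member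
decides whether `e x` belongs to the filter generated by the family. -/
structure IsDecidingTower (𝒮 : Set (Set X)) (A : Set X) (e T : α → Set X) : Prop where
  mem : ∀ x, T x ∈ 𝒮
  eventuallyLE : ∀ x, T x ≤ᶠ[cofinite] A
  eventuallyLE_of_le : ∀ ⦃x y⦄, x ≤ y → T y ≤ᶠ[cofinite] T x
  subset_or_subset_compl : ∀ x, T x ⊆ e x ∨ T x ⊆ (e x)ᶜ

theorem exists_isDecidingTower (h𝒮 : IsPCoideal 𝒮) (hA : A ∈ 𝒮) [WellFoundedLT α]
    (hα : ∀ x : α, (Iio x).Countable) (e : α → Set X) : ∃ T, IsDecidingTower 𝒮 A e T := by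
  obtain ⟨T, hT⟩ := exists_forall_domRestrict_Iio
    (P := fun x (D : Iio x → Set X) S => S ∈ 𝒮 ∧ S ≤ᶠ[cofinite] A ∧
      (∀ y, S ≤ᶠ[cofinite] D y) ∧ (S ⊆ e x ∨ S ⊆ (e x)ᶜ)) fun x T ih => by
    have := (hα x).to_subtype
    refine h𝒮.exists_deciding_pseudointersection hA (fun y : Iio x => (ih y y.2).1)
      (fun y => (ih y y.2).2.1) (directed_of_isDirected_le fun y z hyz => ?_) (e x)
    rcases hyz.eq_or_lt with rfl | hlt
    · exact .rfl
    · exact (ih z z.2).2.2.1 ⟨y, hlt⟩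
  refine ⟨T, fun x => (hT x).1, fun x => (hT x).2.1, fun x y hxy => ?_, fun x => (hT x).2.2.2⟩
  rcases hxy.eq_or_lt with rfl | hlt
  · exact .rfl
  · exact (hT y).2.2.1 ⟨x, hlt⟩

theorem IsDecidingTower.exists_subset_of_mem {e T : α → Set X} (hT : IsDecidingTower 𝒮 A e T)
    (he : Function.Surjective e) {u : Ultrafilter X} (hu : ∀ x, T x ∈ u) (hB : B ∈ u) :
    ∃ x, T x ⊆ B := by
  obtain ⟨x, rfl⟩ := he B
  refine ⟨x, (hT.subset_or_subset_compl x).resolve_right fun hcompl => ?_⟩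
  exact Ultrafilter.compl_mem_iff_notMem.1 (mem_of_superset (hu x) hcompl) hB

end Tower

open Cardinal in
theorem exists_isPPoint (h𝒮 : IsPCoideal 𝒮) (hX : #(Set X) ≤ ℵ₁) (hA : A ∈ 𝒮) :
    ∃ u : Ultrafilter X, A ∈ u ∧ (∀ U ∈ u, U ∈ 𝒮) ∧ IsPPoint u := by
  let Ω := (ℵ₁ : Cardinal).ord.ToType
  have mk_Ω : #Ω = ℵ₁ := mk_ord_toType _
  have : Uncountable Ω := by rw [← aleph0_lt_mk_iff, mk_Ω]; exact aleph0_lt_aleph_one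
  have countable_Iio (x : Ω) : (Iio x).Countable := by
    rw [← le_aleph0_iff_set_countable, ← lt_aleph_one_iff]
    exact (mk_Iio_lt x (by simp [Ω])).trans_eq mk_Ω
  obtain ⟨e, he⟩ : ∃ e : Ω → Set X, Function.Surjective e :=
    Function.exists_surjective_iff.2 ⟨⟨fun _ => ∅⟩, (mk_Ω.symm ▸ hX : #(Set X) ≤ #Ω)⟩
  obtain ⟨T, hT⟩ := h𝒮.exists_isDecidingTower hA countable_Iio e
  obtain ⟨u, hu⟩ := exists_ultrafilter_of_almost_decreasing
    (fun x => h𝒮.infinite (hT.mem x)) hT.eventuallyLE_of_le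
  have exists_subset {U : Set X} (hU : U ∈ u) : ∃ x, T x ⊆ U :=
    hT.exists_subset_of_mem he (fun x => hu x _ .rfl) hU
  refine ⟨u, hu (Classical.arbitrary Ω) A (hT.eventuallyLE _), fun U hU => ?_, fun U hU => ?_⟩
  · obtain ⟨x, hx⟩ := exists_subset hU
    exact h𝒮.mem_of_subset (hT.mem x) hx
  · choose x hx using fun n => exists_subset (hU n)
    obtain ⟨y, hy⟩ := bddAbove_range_of_countable_Iio countable_Iio x
    refine ⟨T y, hu y _ .rfl, fun n => eventuallyLE_cofinite_iff_finite_diff.1 ?_⟩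
    exact (hT.eventuallyLE_of_le (hy (mem_range_self n))).trans (hx n).eventuallyLE

end IsPCoideal

/-- `A` contains a translation pattern `{a} ∪ B ∪ (a + B)` with `B` of size `k`. This is the
configuration that a Schur set has to contain in one color. -/
def ContainsSchurPattern {G : Type*} [Add G] (k : ℕ) (A : Set G) : Prop :=
  ∃ a ∈ A, ∃ B : Finset G, (B : Set G) ⊆ A ∧ B.card = k ∧ ∀ b ∈ B, a + b ∈ A

namespace ContainsSchurPattern

variable {G : Type*} [Add G] {k l : ℕ} {A B : Set G}

theorem mono (hB : ContainsSchurPattern l B) (hkl : k ≤ l) (hBA : B ⊆ A) :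
    ContainsSchurPattern k A := by
  obtain ⟨a, ha, C, hC, rfl, hadd⟩ := hB
  obtain ⟨C', hC'C, hcard⟩ := Finset.exists_subset_card_eq hkl
  exact ⟨a, hBA ha, C', fun b hb => hBA (hC (hC'C hb)), hcard, fun b hb => hBA (hadd b (hC'C hb))⟩

theorem exists_finset (hA : ContainsSchurPattern k A) :
    ∃ F : Finset G, (F : Set G) ⊆ A ∧ ContainsSchurPattern k (F : Set G) := by
  classical
  obtain ⟨a, ha, B, hB, hcard, hadd⟩ := hA
  refine ⟨insert a (B ∪ B.image (a + ·)), ?_, a, by simp, B, fun b hb => ?_, hcard, fun b hb => ?_⟩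
  · have hadd_subset : (B : Set G) ⊆ (a + ·) ⁻¹' A := hadd
    simp [insert_subset_iff, ha, hB, hadd_subset]
  · simp [Finset.mem_coe.1 hb]
  · exact Finset.mem_insert_of_mem
      (Finset.mem_union_right B (Finset.mem_image_of_mem (a + ·) hb))

theorem exists_inter_preimage_iff {κ : Type*} {c : G → κ} {k : ℕ} :
    (∃ i, ContainsSchurPattern k (A ∩ c ⁻¹' {i})) ↔
      ∃ a ∈ A, ∃ B : Finset G, (B : Set G) ⊆ A ∧ B.card = k ∧ (∀ b ∈ B, a + b ∈ A) ∧
        (∀ b ∈ B, c b = c a) ∧ ∀ b ∈ B, c (a + b) = c a := by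
  constructor
  · rintro ⟨i, a, ⟨ha, rfl⟩, B, hB, hcard, hadd⟩
    exact ⟨a, ha, B, fun b hb => (hB hb).1, hcard, fun b hb => (hadd b hb).1,
      fun b hb => (hB hb).2, fun b hb => (hadd b hb).2⟩
  · rintro ⟨a, ha, B, hB, hcard, hadd, hcB, hcadd⟩
    exact ⟨c a, a, ⟨ha, rfl⟩, B, fun b hb => ⟨hB hb, hcB b hb⟩, hcard,
      fun b hb => ⟨hadd b hb, hcadd b hb⟩⟩

end ContainsSchurPattern

section SchurSets

variable {G : Type*} [AddCommGroup G] {A B C : Set G}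

theorem isSchurSet_iff_exists_finset : IsSchurSet A ↔ ∀ r k : ℕ, ∃ X : Finset G,
    (X : Set G) ⊆ A ∧ ∀ c : G → Fin r, ∃ i, ContainsSchurPattern k (↑X ∩ c ⁻¹' {i}) := by
  simp only [IsSchurSet, ContainsSchurPattern.exists_inter_preimage_iff,
    Finset.mem_coe, Finset.coe_subset]

theorem isSchurSet_iff_forall_coloring : IsSchurSet A ↔
    ∀ (r k : ℕ) (c : G → Fin r), ∃ i, ContainsSchurPattern k (A ∩ c ⁻¹' {i}) := by
  classical
  rw [isSchurSet_iff_exists_finset]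
  refine ⟨fun hA r k c => ?_, fun hA r k => ?_⟩
  · obtain ⟨X, hXA, hX⟩ := hA r k
    obtain ⟨i, hi⟩ := hX c
    exact ⟨i, hi.mono le_rfl (inter_subset_inter_left _ hXA)⟩
  · obtain ⟨𝓣, h𝓣, h𝓣_fin, hmono⟩ := exists_finite_subfamily_monochromatic (κ := Fin r)
      (𝓕 := {F : Finset G | (F : Set G) ⊆ A ∧ ContainsSchurPattern k (F : Set G)}) fun c => by
      obtain ⟨i, hi⟩ := hA r k c
      obtain ⟨F, hF, hpattern⟩ := hi.exists_finset
      exact ⟨F, ⟨hF.trans inter_subset_left, hpattern⟩, i, hF.trans inter_subset_right⟩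
    refine ⟨h𝓣_fin.toFinset.biUnion id, ?_, fun c => ?_⟩
    · simpa using fun F hF => (h𝓣 hF).1
    · obtain ⟨F, hF, i, hi⟩ := hmono c
      have hFX : F ⊆ h𝓣_fin.toFinset.biUnion id :=
        Finset.subset_biUnion_of_mem id (h𝓣_fin.mem_toFinset.2 hF)
      exact ⟨i, (h𝓣 hF).2.mono le_rfl (subset_inter (Finset.coe_subset.2 hFX) hi)⟩

theorem IsSchurSet.exists_color {κ : Type*} [Finite κ] (hA : IsSchurSet A) (c : G → κ) (k : ℕ) :
    ∃ i, ContainsSchurPattern k (A ∩ c ⁻¹' {i}) := by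
  obtain ⟨n, ⟨f⟩⟩ := Finite.exists_equiv_fin κ
  obtain ⟨i, hi⟩ := isSchurSet_iff_forall_coloring.1 hA n k (f ∘ c)
  refine ⟨f.symm i, hi.mono le_rfl (inter_subset_inter_right A fun x hx => ?_)⟩
  exact f.eq_symm_apply.2 hx

theorem IsSchurSet.containsSchurPattern (hA : IsSchurSet A) (k : ℕ) : ContainsSchurPattern k A := by
  obtain ⟨_, hpattern⟩ := hA.exists_color (fun _ => ()) k
  exact hpattern.mono le_rfl inter_subset_left

theorem IsSchurSet.infinite (hA : IsSchurSet A) : A.Infinite := by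
  intro hfin
  obtain ⟨_, _, B, hB, hcard, _⟩ := hA.containsSchurPattern (hfin.toFinset.card + 1)
  have := Finset.card_le_card (hfin.subset_toFinset.2 hB)
  omega

/- Color by membership in `B` together with bad colorings of `B` and of `C`. -/
theorem IsSchurSet.or_of_subset_union (hA : IsSchurSet A) (hABC : A ⊆ B ∪ C) :
    IsSchurSet B ∨ IsSchurSet C := by
  by_contra! ⟨hB, hC⟩
  simp only [isSchurSet_iff_forall_coloring, not_forall, not_exists] at hB hC
  obtain ⟨_, k, c, hB⟩ := hB
  obtain ⟨_, l, d, hC⟩ := hC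
  obtain ⟨⟨p, i, j⟩, hpattern⟩ := hA.exists_color (fun x => (x ∈ B, c x, d x)) (max k l)
  by_cases hp : p
  · refine hB i (hpattern.mono (le_max_left k l) ?_)
    rintro x ⟨_, hx⟩
    simp_all
  · refine hC j (hpattern.mono (le_max_right k l) ?_)
    rintro x ⟨hxA, hx⟩
    have := hABC hxA
    simp_all

theorem exists_isSchurSet_pseudointersection {D : ℕ → Set G} (hD_anti : Antitone D)
    (hD : ∀ n, IsSchurSet (D n)) : ∃ S, IsSchurSet S ∧ ∀ n, S ≤ᶠ[cofinite] D n := by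
  choose X hXD hX using fun n : ℕ => hD n n.unpair.1 n.unpair.2
  refine ⟨⋃ n, (X n : Set G), fun r k => ?_, fun n => ?_⟩
  · obtain ⟨n, hn⟩ := Nat.surjective_unpair (r, k)
    obtain ⟨rfl, rfl⟩ := Prod.mk.inj hn
    exact ⟨X n, subset_iUnion (fun m => (X m : Set G)) n, hX n⟩
  · rw [eventuallyLE_cofinite_iff_finite_diff]
    refine ((finite_Iio n).biUnion fun m _ => (X m).finite_toSet).subset ?_
    rintro x ⟨hx, hxn⟩
    obtain ⟨m, hm⟩ := mem_iUnion.1 hx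
    have hmn : m < n := lt_of_not_ge fun hnm => hxn (hD_anti hnm (hXD m hm))
    exact mem_biUnion hmn hm

theorem isPCoideal_setOf_isSchurSet : IsPCoideal {A : Set G | IsSchurSet A} where
  infinite _ hA := hA.infinite
  mem_or_mem _ _ _ hA := hA.or_of_subset_union
  exists_pseudointersection _ hD_anti hD := exists_isSchurSet_pseudointersection hD_anti hD

end SchurSets

section Idempotents

attribute [local instance] Ultrafilter.add Ultrafilter.addSemigroup

theorem exists_idempotent_ultrafilter_le_cofinite (M : Type*) [AddSemigroup M] [IsLeftCancelAdd M]
    [Infinite M] : ∃ u : Ultrafilter M, ↑u ≤ (cofinite : Filter M) ∧ u + u = u := by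
  refine exists_idempotent_in_compact_add_subsemigroup Ultrafilter.continuous_add_left
    {u : Ultrafilter M | ↑u ≤ (cofinite : Filter M)} ⟨hyperfilter M, hyperfilter_le_cofinite⟩
    (IsClosed.isCompact ?_) fun u _ v hv => ?_
  · simp only [le_cofinite_iff_compl_singleton_mem, ofPred_forall]
    exact isClosed_iInter fun x => ultrafilter_isClosed_basic {x}ᶜ
  · refine le_cofinite_iff_eventually_ne.2 fun x => (Ultrafilter.eventually_add u v _).2 ?_
    refine Eventually.of_forall fun a => hv ?_
    exact ((finite_singleton x).preimage (add_right_injective a).injOn).compl_mem_cofinite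

theorem containsSchurPattern_of_mem_idempotent {M : Type*} [Add M] {u : Ultrafilter M}
    (hu : ↑u ≤ (cofinite : Filter M)) (hidem : u + u = u) {U : Set M} (hU : U ∈ u) (k : ℕ) :
    ContainsSchurPattern k U := by
  have hadd : ∀ᶠ a in u, ∀ᶠ b in u, a + b ∈ U :=
    (Ultrafilter.eventually_add u u (· ∈ U)).1 (hidem.symm ▸ hU)
  obtain ⟨a, haU, ha⟩ := (Eventually.and hU hadd).exists
  have hinf : (U ∩ {b | a + b ∈ U}).Infinite := fun hfin =>
    Ultrafilter.compl_mem_iff_notMem.1 (hu hfin.compl_mem_cofinite) (inter_mem hU ha)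
  obtain ⟨B, hB, hcard⟩ := hinf.exists_subset_card_eq k
  exact ⟨a, haU, B, hB.trans inter_subset_left, hcard, fun b hb => (hB hb).2⟩

variable {G : Type*} [AddCommGroup G]

theorem isSchurSet_of_mem_idempotent {u : Ultrafilter G} (hu : ↑u ≤ (cofinite : Filter G))
    (hidem : u + u = u) {A : Set G} (hA : A ∈ u) : IsSchurSet A := by
  refine isSchurSet_iff_forall_coloring.2 fun r k c => ?_
  obtain ⟨i, hi⟩ := Ultrafilter.eq_pure_of_finite (u.map c)
  have hcolor : c ⁻¹' {i} ∈ u := Ultrafilter.mem_map.1 (hi ▸ mem_singleton i)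
  exact ⟨i, containsSchurPattern_of_mem_idempotent hu hidem (inter_mem hA hcolor) k⟩

theorem isSchurSet_univ [Infinite G] : IsSchurSet (univ : Set G) := by
  obtain ⟨u, hu, hidem⟩ := exists_idempotent_ultrafilter_le_cofinite G
  exact isSchurSet_of_mem_idempotent hu hidem univ_mem

end Idempotents

theorem isSchurUltrafilter_of_forall_isSchurSet {G : Type*} [AddCommGroup G] {u : Ultrafilter G}
    (hu : ∀ U ∈ u, IsSchurSet U) : IsSchurUltrafilter u := by
  intro U hU
  obtain ⟨a, ha, B, hB, hcard, hadd⟩ := (hu U hU).containsSchurPattern 1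
  obtain ⟨b, rfl⟩ := Finset.card_eq_one.1 hcard
  exact ⟨a, ha, b, hB (by simp), hadd b (by simp)⟩

theorem exists_schur_ppoint_of_CH_general (G : Type*) [AddCommGroup G] [Countable G] [Infinite G]
    (hCH : Cardinal.continuum = Cardinal.aleph 1) :
    (∀ A : Set G, IsSchurSet A →
      ∃ u : Ultrafilter G, IsFreeUltrafilter u ∧ IsSchurUltrafilter u ∧ A ∈ u ∧ IsPPoint u) ∧
    ∃ u : Ultrafilter G, IsFreeUltrafilter u ∧ IsSchurUltrafilter u ∧ IsPPoint u := by
  have exists_of_isSchurSet (A : Set G) (hA : IsSchurSet A) : ∃ u : Ultrafilter G,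
      IsFreeUltrafilter u ∧ IsSchurUltrafilter u ∧ A ∈ u ∧ IsPPoint u := by
    obtain ⟨u, hAu, hu, hPPoint⟩ :=
      isPCoideal_setOf_isSchurSet.exists_isPPoint (mk_set_le_aleph_one_of_CH hCH) hA
    exact ⟨u, fun U hU => (hu U hU).infinite, isSchurUltrafilter_of_forall_isSchurSet hu, hAu,
      hPPoint⟩
  obtain ⟨u, hfree, hSchur, -, hPPoint⟩ := exists_of_isSchurSet univ isSchurSet_univ
  exact ⟨exists_of_isSchurSet, u, hfree, hSchur, hPPoint⟩

/-- Under CH, for every Schur subset `A` of `ℤ` there is a free Schur ultrafilter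
`u` on `ℤ` which is a P-point and contains `A`.  In particular, under CH there
exists a free Schur ultrafilter on `ℤ` that is a P-point. -/
theorem exists_schur_ppoint_of_CH (hCH : Cardinal.continuum = Cardinal.aleph 1) :
    (∀ A : Set ℤ, IsSchurSet A →
      ∃ u : Ultrafilter ℤ, IsFreeUltrafilter u ∧ IsSchurUltrafilter u ∧ A ∈ u ∧ IsPPoint u) ∧
    ∃ u : Ultrafilter ℤ, IsFreeUltrafilter u ∧ IsSchurUltrafilter u ∧ IsPPoint u :=
  exists_schur_ppoint_of_CH_general ℤ hCH
end

section
/- The set of positive integers is a Schur subset of ℤ. Equivalently, for every r, k ∈ ℕ there exists N ∈ ℕ such that for every coloring c : {1, …, N} → {1, …, r} there exist a ∈ {1, …, N} and a k-element subset B ⊆ {1, …, N} with a + B ⊆ {1, …, N} such that c is constant on {a} ∪ B ∪ (a + B). -/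
/-!
Fix a coloring. By Hindman's theorem the finite sums of some sequence `s₀, s₁, …` all receive the
same color. Take `a = s₀` and let `B` consist of `k` finite sums of `s₁, s₂, …`: then `a`, `B` and
`a + B` all lie among the finite sums of `s`. Enough distinct finite sums exist as soon as none of
them is `0`. Rado's selection principle makes the finite set in which the pattern is found
independent of the coloring.
-/

open Hindman

theorem exists_finset_forall_coloring_exists_monochromatic {α κ : Type*} [Finite κ]
    {𝓕 : Set (Finset α)}
    (h𝓕 : ∀ c : α → κ, ∃ P ∈ 𝓕, ∃ i, ∀ x ∈ P, c x = i) :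
    ∃ X : Finset α, ∀ c : α → κ, ∃ P ∈ 𝓕, P ⊆ X ∧ ∃ i, ∀ x ∈ P, c x = i := by
  by_contra! hX
  choose bad hbad using hX
  obtain ⟨c, hc⟩ := Finset.rado_selection bad
  obtain ⟨P, hP, i, hi⟩ := h𝓕 c
  obtain ⟨X, hPX, hcX⟩ := hc P
  obtain ⟨x, hx, hne⟩ := hbad X P hP hPX i
  exact hne ((hcX x hx).symm.trans (hi x hx))

theorem exists_FS_subset_setOf_color_eq {M κ : Type*} [AddSemigroup M] [Finite κ]
    (s : Stream' M) (c : M → κ) :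
    ∃ (i : κ) (t : Stream' M), FS t ⊆ {x ∈ FS s | c x = i} := by
  obtain ⟨_, ⟨i, rfl⟩, t, ht⟩ := FS_partition_regular s
    (Set.range fun i ↦ {x ∈ FS s | c x = i}) (Set.finite_range _)
    fun x hx ↦ ⟨_, ⟨c x, rfl⟩, hx, rfl⟩
  exact ⟨i, t, ht⟩

theorem FS_subset_addSubsemigroup {M : Type*} [AddSemigroup M] {S : AddSubsemigroup M}
    {s : Stream' M} (hs : ∀ n, s.get n ∈ S) : FS s ⊆ S := by
  intro x hx
  induction hx with
  | head' s => exact hs 0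
  | tail' s _ _ ih => exact ih fun n ↦ hs (n + 1)
  | cons' s x _ ih => exact S.add_mem (hs 0) (ih fun n ↦ hs (n + 1))

theorem exists_finset_card_eq_subset_FS {M : Type*} [AddLeftCancelMonoid M] (k : ℕ)
    {s : Stream' M} (hs : 0 ∉ FS s) : ∃ B : Finset M, B.card = k ∧ (B : Set M) ⊆ FS s := by
  classical
  induction k generalizing s with
  | zero => exact ⟨∅, by simp⟩
  | succ k ih =>
    have hs_tail : 0 ∉ FS s.tail := fun h ↦ hs (FS.tail s 0 h)
    obtain ⟨B, hBk, hB⟩ := ih hs_tail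
    have hhead : s.head ∉ B.map (addLeftEmbedding s.head) := by
      simpa using fun h ↦ hs_tail (hB h)
    refine ⟨insert s.head (B.map (addLeftEmbedding s.head)), ?_, ?_⟩
    · rw [Finset.card_insert_of_notMem hhead, Finset.card_map, hBk]
    · rw [Finset.coe_insert, Finset.coe_map, Set.insert_subset_iff, Set.image_subset_iff]
      exact ⟨FS.head s, fun b hb ↦ FS.cons s b (hB hb)⟩

section SchurPattern

variable {M : Type*} [Add M]

/-- The finite set `{a} ∪ B ∪ (a + B)` on which a Schur set asks the coloring to be constant. -/
def schurPattern [DecidableEq M] (a : M) (B : Finset M) : Finset M :=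
  insert a (B ∪ B.image (a + ·))

theorem forall_mem_schurPattern [DecidableEq M] {a : M} {B : Finset M} {p : M → Prop} :
    (∀ x ∈ schurPattern a B, p x) ↔ p a ∧ (∀ b ∈ B, p b) ∧ ∀ b ∈ B, p (a + b) := by
  simp only [schurPattern, Finset.forall_mem_insert, Finset.forall_mem_union,
    Finset.forall_mem_image]

/-- Every `r`-coloring of the finite set `X` has a monochromatic pattern `{a} ∪ B ∪ (a + B)` with
`B.card = k` inside `X`; this is the condition on `X` in `IsSchurSet`. As there, colorings are
defined on all of `M`, but only their values on `X` matter. -/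
def ForcesSchurPattern (r k : ℕ) (X : Finset M) : Prop :=
  ∀ c : M → Fin r, ∃ a ∈ X, ∃ B : Finset M,
    B ⊆ X ∧ B.card = k ∧ (∀ b ∈ B, a + b ∈ X) ∧
    (∀ b ∈ B, c b = c a) ∧ (∀ b ∈ B, c (a + b) = c a)

theorem forcesSchurPattern_of_schurPattern_subset [DecidableEq M] {r k : ℕ} {X : Finset M}
    (hX : ∀ c : M → Fin r, ∃ (a : M) (B : Finset M),
      B.card = k ∧ schurPattern a B ⊆ X ∧ ∃ i, ∀ x ∈ schurPattern a B, c x = i) :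
    ForcesSchurPattern r k X := by
  intro c
  obtain ⟨a, B, hBk, hsub, i, hi⟩ := hX c
  obtain ⟨haX, hBX, haBX⟩ := forall_mem_schurPattern.1 hsub
  obtain ⟨rfl, hcB, hcaB⟩ := forall_mem_schurPattern.1 hi
  exact ⟨a, haX, B, hBX, hBk, haBX, hcB, hcaB⟩

theorem ForcesSchurPattern.mono {r k : ℕ} {X Y : Finset M} (hX : ForcesSchurPattern r k X)
    (hXY : X ⊆ Y) : ForcesSchurPattern r k Y := by
  intro c
  obtain ⟨a, haX, B, hBX, hBk, haBX, hc⟩ := hX c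
  exact ⟨a, hXY haX, B, hBX.trans hXY, hBk, fun b hb ↦ hXY (haBX b hb), hc⟩

end SchurPattern

theorem exists_schurPattern_subset_FS {M : Type*} [AddLeftCancelMonoid M] [DecidableEq M] (k : ℕ)
    {s : Stream' M} (hs : 0 ∉ FS s) :
    ∃ (a : M) (B : Finset M), B.card = k ∧ (schurPattern a B : Set M) ⊆ FS s := by
  obtain ⟨B, hBk, hB⟩ := exists_finset_card_eq_subset_FS k fun h ↦ hs (FS.tail s 0 h)
  exact ⟨s.head, B, hBk, forall_mem_schurPattern.2
    ⟨FS.head s, fun b hb ↦ FS.tail s b (hB hb), fun b hb ↦ FS.cons s b (hB hb)⟩⟩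

section SchurSet

variable {G : Type*} [AddCommGroup G]

theorem IsSchurSet.exists_forcesSchurPattern_of_directed {A : Set G} (hA : IsSchurSet A)
    {ι : Type*} [Nonempty ι] {F : ι → Finset G} (hF : Directed (· ⊆ ·) F)
    (hAF : A ⊆ ⋃ i, (F i : Set G)) (r k : ℕ) : ∃ i, ForcesSchurPattern r k (F i) := by
  obtain ⟨X, hXA, hX⟩ := hA r k
  obtain ⟨i, hi⟩ := Directed.exists_mem_subset_of_finset_subset_biUnion
    (f := fun i ↦ (F i : Set G)) hF (hXA.trans hAF)
  exact ⟨i, ForcesSchurPattern.mono hX hi⟩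

theorem positives_isSchurSet_general {A : Set G} {s : Stream' G} (hsA : FS s ⊆ A)
    (hs : 0 ∉ FS s) : IsSchurSet A := by
  classical
  intro r k
  have hmono (c : G → Fin r) :
      ∃ P ∈ {P : Finset G | ∃ a B, B.card = k ∧ schurPattern a B = P ∧ (P : Set G) ⊆ A},
        ∃ i, ∀ x ∈ P, c x = i := by
    obtain ⟨i, t, ht⟩ := exists_FS_subset_setOf_color_eq s c
    obtain ⟨a, B, hBk, hP⟩ := exists_schurPattern_subset_FS k fun h ↦ hs (ht h).1
    exact ⟨_, ⟨a, B, hBk, rfl, fun x hx ↦ hsA (ht (hP hx)).1⟩, i, fun x hx ↦ (ht (hP hx)).2⟩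
  obtain ⟨X, hX⟩ := exists_finset_forall_coloring_exists_monochromatic hmono
  refine ⟨{x ∈ X | x ∈ A}, fun x hx ↦ (Finset.mem_filter.1 hx).2,
    forcesSchurPattern_of_schurPattern_subset fun c ↦ ?_⟩
  obtain ⟨_, ⟨a, B, hBk, rfl, hPA⟩, hPX, hc⟩ := hX c
  exact ⟨a, B, hBk, fun x hx ↦ Finset.mem_filter.2 ⟨hPX hx, hPA hx⟩, hc⟩

theorem isSchurSet_of_addSubsemigroup {S : AddSubsemigroup G} (hS : (S : Set G).Nonempty)
    (h0 : 0 ∉ S) : IsSchurSet (S : Set G) := by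
  obtain ⟨x, hx⟩ := hS
  have hFS : FS (Stream'.const x) ⊆ S := FS_subset_addSubsemigroup fun _ ↦ hx
  exact positives_isSchurSet_general hFS fun h ↦ h0 (hFS h)

theorem isSchurSet_setOf_pos [PartialOrder G] [IsOrderedAddMonoid G] {x : G} (hx : 0 < x) :
    IsSchurSet {y : G | 0 < y} :=
  isSchurSet_of_addSubsemigroup (S := ⟨{y | 0 < y}, add_pos⟩) ⟨x, hx⟩
    fun h ↦ lt_irrefl 0 h

end SchurSet

theorem directed_Icc_one_natCast : Directed (· ⊆ ·) fun N : ℕ ↦ Finset.Icc 1 (N : ℤ) :=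
  Monotone.directed_le fun _ _ h ↦ Finset.Icc_subset_Icc_right (Int.ofNat_le.2 h)

theorem setOf_pos_subset_iUnion_Icc_one_natCast :
    {n : ℤ | 0 < n} ⊆ ⋃ N : ℕ, (Finset.Icc 1 (N : ℤ) : Set ℤ) := fun n hn ↦
  Set.mem_iUnion.2 ⟨n.toNat, Finset.mem_coe.2 (Finset.mem_Icc.2 ⟨hn, n.self_le_toNat⟩)⟩

/-- The set of positive integers is a Schur subset of `ℤ`: equivalently, for all
`r, k : ℕ` there exists `N : ℕ` such that for every `r`-coloring of `{1, …, N}` there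
exist `a ∈ {1, …, N}` and a `k`-element subset `B ⊆ {1, …, N}` with
`a + B ⊆ {1, …, N}` such that the coloring is constant on `{a} ∪ B ∪ (a + B)`. -/
theorem positives_isSchurSet :
    IsSchurSet {n : ℤ | 0 < n} ∧
    ∀ r k : ℕ, ∃ N : ℕ, ∀ c : ℤ → Fin r,
      ∃ a ∈ Finset.Icc 1 (N : ℤ), ∃ B : Finset ℤ,
        B ⊆ Finset.Icc 1 (N : ℤ) ∧ B.card = k ∧ (∀ b ∈ B, a + b ∈ Finset.Icc 1 (N : ℤ)) ∧
        (∀ b ∈ B, c b = c a) ∧ (∀ b ∈ B, c (a + b) = c a) := by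
  have hpos : IsSchurSet {n : ℤ | 0 < n} := isSchurSet_setOf_pos one_pos
  exact ⟨hpos, hpos.exists_forcesSchurPattern_of_directed directed_Icc_one_natCast
    setOf_pos_subset_iUnion_Icc_one_natCast⟩
end

section
/- The set Sch^fin(ℤ) of all free Schur ultrafilters on ℤ which are not infinitary Schur is nonempty, and moreover for every free Schur ultrafilter u on ℤ and every U ∈ u there exists a free Schur ultrafilter v on ℤ with U ∈ v such that v is not infinitary Schur. -/
/-- An ultrafilter `u` on an additive semigroup is *infinitary Schur* if for each
`U ∈ u` there exist `a ∈ U` and an infinite subset `B ⊆ U` with `a + B ⊆ U`. -/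
def IsInfSchurUltrafilter {S : Type*} [Add S] (u : Ultrafilter S) : Prop :=
  ∀ U ∈ u, ∃ a ∈ U, ∃ B ⊆ U, B.Infinite ∧ ∀ b ∈ B, a + b ∈ U

/-!
A set belongs to a Schur ultrafilter iff each of its finite colorings has a monochromatic Schur
triple, and by compactness the triples for a fixed number of colors can be found in a finite subset.
Given a free Schur ultrafilter `u` and `U ∈ u`, we build finite sets `E 0 ⊆ E 1 ⊆ ⋯ ⊆ U` such that
`E (r + 1)` handles all `r`-colorings, choosing the new elements so generically that a triple
`(a, b, a + b)` in `E (r + 1)` with `a ∈ E r` lies entirely in `E r`. The genericity is a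
`u`-large condition: `E` being finite, it excludes finitely many elements and, for each `a ∈ E`,
asks for a member of `u` disjoint from its translate by `a`, which exists because `a + ·` is
injective without fixed points. The union of the `E r` then belongs to a Schur ultrafilter, and
each `a` in it starts only finitely many triples in it.
-/

open Filter Set

section Free

variable {X : Type*} {u : Ultrafilter X}

lemma isFreeUltrafilter_iff_le_cofinite : IsFreeUltrafilter u ↔ (u : Filter X) ≤ cofinite := by
  refine ⟨fun hu A hA ↦ ?_, fun hu A hAu hA ↦ ?_⟩
  · exact Ultrafilter.compl_notMem_iff.1 fun hAu ↦ hu _ hAu hA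
  · exact Ultrafilter.compl_mem_iff_notMem.1 (hu hA.compl_mem_cofinite) hAu

lemma IsFreeUltrafilter.eventually_notMem (hu : IsFreeUltrafilter u) {A : Set X} (hA : A.Finite) :
    ∀ᶠ x in u, x ∉ A :=
  isFreeUltrafilter_iff_le_cofinite.1 hu hA.compl_mem_cofinite

lemma isClosed_setOf_isFreeUltrafilter : IsClosed {u : Ultrafilter X | IsFreeUltrafilter u} := by
  have h : {u : Ultrafilter X | IsFreeUltrafilter u} =
      ⋂ A : {A : Set X // A.Finite}, {u : Ultrafilter X | (A : Set X) ∈ u}ᶜ := by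
    ext u
    simp only [mem_ofPred_eq, mem_iInter, mem_compl_iff, Subtype.forall]
    exact forall_congr' fun A ↦ imp_not_comm
  rw [h]
  exact isClosed_iInter fun A ↦ (ultrafilter_isOpen_basic _).isClosed_compl

end Free

section FixedPointFree

variable {X : Type*} {f : X → X}

lemma exists_maximal_forall_apply_notMem (f : X → X) :
    ∃ A, Maximal (fun A : Set X ↦ ∀ x ∈ A, f x ∉ A) A := by
  refine zorn_subset {A : Set X | ∀ x ∈ A, f x ∉ A} fun c hcS hc ↦
    ⟨⋃₀ c, ?_, fun A ↦ subset_sUnion_of_mem⟩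
  rintro x ⟨A, hA, hxA⟩ ⟨B, hB, hxB⟩
  obtain hAB | hBA := hc.total hA hB
  · exact hcS hB x (hAB hxA) hxB
  · exact hcS hA x hxA (hBA hxB)

lemma mem_or_apply_mem_or_mem_image_of_maximal {A : Set X}
    (hA : Maximal (fun A : Set X ↦ ∀ x ∈ A, f x ∉ A) A) (hfix : ∀ x, f x ≠ x) (x : X) :
    x ∈ A ∨ f x ∈ A ∨ x ∈ f '' A := by
  by_contra! ⟨hxA, hfxA, hxf⟩
  refine hxA (hA.mem_of_prop_insert ?_)
  rintro y (rfl | hy) (hfy | hfy)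
  · exact hfix y hfy
  · exact hfxA hfy
  · exact hxf ⟨y, hy, hfy⟩
  · exact hA.prop y hy hfy

-- If `A` is maximal disjoint from its image, then `A`, `f ⁻¹' A` and `f '' A` cover `X`.
lemma exists_mem_ultrafilter_forall_apply_notMem (u : Ultrafilter X) (hf : f.Injective)
    (hfix : ∀ x, f x ≠ x) : ∃ A ∈ u, ∀ x ∈ A, f x ∉ A := by
  obtain ⟨A, hA⟩ := exists_maximal_forall_apply_notMem f
  have hcover : ∀ᶠ x in u, x ∈ A ∨ f x ∈ A ∨ x ∈ f '' A :=
    .of_forall (mem_or_apply_mem_or_mem_image_of_maximal hA hfix)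
  simp only [Ultrafilter.eventually_or] at hcover
  obtain h | h | h := hcover
  · exact ⟨A, h, hA.prop⟩
  · exact ⟨f ⁻¹' A, h, fun x hx ↦ hA.prop (f x) hx⟩
  · refine ⟨f '' A, h, forall_mem_image.2 fun x hx ↦ ?_⟩
    rw [hf.mem_set_image]
    exact hA.prop x hx

end FixedPointFree

section PartitionSchur

variable {S κ ι : Type*} [Add S] {A B : Set S}

/-- A set is *partition Schur* for a type `κ` of colors if each `κ`-coloring of the semigroup has a
monochromatic Schur triple `a, b, a + b` in the set. The colorings are defined on all of `S`, but
only their restrictions to `A` matter. -/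
def IsPartitionSchur (κ : Type*) (A : Set S) : Prop :=
  ∀ c : S → κ, ∃ a ∈ A, ∃ b ∈ A, a + b ∈ A ∧ c a = c b ∧ c (a + b) = c b

lemma IsPartitionSchur.mono (hA : IsPartitionSchur κ A) (hAB : A ⊆ B) : IsPartitionSchur κ B := by
  intro c
  obtain ⟨a, ha, b, hb, hab, hc⟩ := hA c
  exact ⟨a, hAB ha, b, hAB hb, hAB hab, hc⟩

lemma IsPartitionSchur.of_injective (hA : IsPartitionSchur ι A) {f : κ → ι} (hf : f.Injective) :
    IsPartitionSchur κ A := by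
  intro c
  obtain ⟨a, ha, b, hb, hab, hca, hcab⟩ := hA (f ∘ c)
  exact ⟨a, ha, b, hb, hab, hf hca, hf hcab⟩

-- Compactness of the space `S → κ` of colorings.
lemma IsPartitionSchur.exists_finite_subset [Finite κ] (hA : IsPartitionSchur κ A) :
    ∃ F ⊆ A, F.Finite ∧ IsPartitionSchur κ F := by
  let : TopologicalSpace κ := ⊥
  have : DiscreteTopology κ := ⟨rfl⟩
  let T := {p : S × S // p.1 ∈ A ∧ p.2 ∈ A ∧ p.1 + p.2 ∈ A}
  let mono (p : T) : Set (S → κ) := {c | c p.1.1 = c p.1.2 ∧ c (p.1.1 + p.1.2) = c p.1.2}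
  have hopen (p : T) : IsOpen (mono p) :=
    (isOpen_discrete {q : κ × κ × κ | q.1 = q.2.1 ∧ q.2.2 = q.2.1}).preimage
      (f := fun c : S → κ ↦ (c p.1.1, c p.1.2, c (p.1.1 + p.1.2))) (by fun_prop)
  have hcover : univ ⊆ ⋃ p, mono p := fun c _ ↦ by
    obtain ⟨a, ha, b, hb, hab, hc⟩ := hA c
    exact mem_iUnion.2 ⟨⟨(a, b), ha, hb, hab⟩, hc⟩
  obtain ⟨t, ht⟩ := isCompact_univ.elim_finite_subcover mono hopen hcover
  refine ⟨⋃ p ∈ t, {p.1.1, p.1.2, p.1.1 + p.1.2}, ?_, ?_, fun c ↦ ?_⟩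
  · refine iUnion₂_subset fun p _ ↦ ?_
    rintro x (rfl | rfl | rfl)
    exacts [p.2.1, p.2.2.1, p.2.2.2]
  · exact t.finite_toSet.biUnion fun p _ ↦ by simp
  · obtain ⟨p, hp, hc⟩ := mem_iUnion₂.1 (ht (mem_univ c))
    exact ⟨p.1.1, mem_biUnion hp (by simp), p.1.2, mem_biUnion hp (by simp),
      mem_biUnion hp (by simp), hc⟩

lemma IsSchurUltrafilter.isPartitionSchur [Finite κ] {u : Ultrafilter S}
    (hu : IsSchurUltrafilter u) (hA : A ∈ u) : IsPartitionSchur κ A := by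
  intro c
  obtain ⟨k, hk⟩ : ∃ k, ∀ᶠ x in u, c x = k :=
    Ultrafilter.eventually_exists_iff.1 (.of_forall fun x ↦ ⟨c x, rfl⟩)
  obtain ⟨a, ⟨ha, hca⟩, b, ⟨hb, hcb⟩, hab, hcab⟩ := hu _ (inter_mem hA hk)
  exact ⟨a, ha, b, hb, hab, hca.trans hcb.symm, hcab.trans hcb.symm⟩

-- A Schur ultrafilter is one containing the complement of every triple-free set. Finitely many of
-- these complements meet inside `A`: color `x` by the collection of those containing it.
lemma exists_isSchurUltrafilter_mem (hA : ∀ r, IsPartitionSchur (Fin r) A) :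
    ∃ v : Ultrafilter S, IsSchurUltrafilter v ∧ A ∈ v := by
  let C : Set (Set S) := {B | ¬ ∃ a ∈ Bᶜ, ∃ b ∈ Bᶜ, a + b ∈ Bᶜ}
  obtain ⟨v, hv⟩ : ∃ v : Ultrafilter S, insert A C ⊆ v.sets := by
    refine Ultrafilter.exists_ultrafilter_of_finite_inter_nonempty _ fun T hT ↦ ?_
    obtain ⟨r, ⟨e⟩⟩ := Finite.exists_equiv_fin (T → Prop)
    obtain ⟨a, -, b, hb, -, hab, haddb⟩ :=
      (hA r).of_injective e.injective fun x B ↦ x ∈ B.1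
    refine ⟨b, fun B hB ↦ ?_⟩
    have haB : a ∈ B ↔ b ∈ B := iff_of_eq (congrFun hab ⟨B, hB⟩)
    have haddB : a + b ∈ B ↔ b ∈ B := iff_of_eq (congrFun haddb ⟨B, hB⟩)
    obtain rfl | hBC := hT hB
    · exact hb
    · by_contra hbB
      exact hBC ⟨a, haB.not.2 hbB, b, hbB, haddB.not.2 hbB⟩
  refine ⟨v, fun B hB ↦ ?_, hv (mem_insert A C)⟩
  by_contra hBtriple
  have hBC : Bᶜ ∈ C := by simpa only [C, mem_ofPred_eq, compl_compl] using hBtriple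
  exact Ultrafilter.compl_mem_iff_notMem.1 (hv (mem_insert_of_mem A hBC)) hB

end PartitionSchur

section EndExtension

variable {S : Type*} [Add S] {A : Set S}

/-- `F` is a *Schur end extension* of `E` if it contains `E` and every Schur triple `a, b, a + b`
in `F` with first entry `a ∈ E` lies in `E`. This preorder is what keeps the number of triples
with a given first entry finite along an increasing sequence of finite sets. -/
structure IsSchurEndExtension (E F : Set S) : Prop where
  subset : E ⊆ F
  mem_and_add_mem : ∀ a ∈ E, ∀ b ∈ F, a + b ∈ F → b ∈ E ∧ a + b ∈ E

instance : Std.Refl (IsSchurEndExtension (S := S)) :=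
  ⟨fun _ ↦ ⟨Subset.rfl, fun _ _ _ hb hab ↦ ⟨hb, hab⟩⟩⟩

instance : IsTrans (Set S) IsSchurEndExtension where
  trans _ _ _ hDE hEF := ⟨hDE.subset.trans hEF.subset, fun a ha b hb hab ↦
    have h := hEF.mem_and_add_mem a (hDE.subset ha) b hb hab
    hDE.mem_and_add_mem a ha b h.1 h.2⟩

lemma finite_setOf_add_mem_iUnion {E : ℕ → Set S} (hfin : ∀ n, (E n).Finite)
    (hE : ∀ n, IsSchurEndExtension (E n) (E (n + 1))) {a : S} (ha : a ∈ ⋃ n, E n) :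
    {b ∈ ⋃ n, E n | a + b ∈ ⋃ n, E n}.Finite := by
  have hle {m n : ℕ} (hmn : m ≤ n) : IsSchurEndExtension (E m) (E n) :=
    Nat.rel_of_forall_rel_succ_of_le _ hE hmn
  obtain ⟨k, hak⟩ := mem_iUnion.1 ha
  refine (hfin k).subset ?_
  rintro b ⟨hb, hab⟩
  obtain ⟨m, hbm⟩ := mem_iUnion.1 hb
  obtain ⟨n, habn⟩ := mem_iUnion.1 hab
  have hbN : b ∈ E (max k (max m n)) := (hle (by omega)).subset hbm
  have habN : a + b ∈ E (max k (max m n)) := (hle (by omega)).subset habn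
  exact ((hle (le_max_left ..)).mem_and_add_mem a hak b hbN habN).1

lemma not_isInfSchurUltrafilter_of_finite {v : Ultrafilter S} (hA : A ∈ v)
    (hfin : ∀ a ∈ A, {b ∈ A | a + b ∈ A}.Finite) : ¬ IsInfSchurUltrafilter v := by
  intro hv
  obtain ⟨a, ha, B, hBA, hB, hab⟩ := hv A hA
  exact hB ((hfin a ha).subset fun b hb ↦ ⟨hBA hb, hab b hb⟩)

lemma IsSchurUltrafilter.isFreeUltrafilter {v : Ultrafilter S} (hv : IsSchurUltrafilter v)
    (hA : A ∈ v) (hidem : ∀ x ∈ A, x + x ≠ x) : IsFreeUltrafilter v := by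
  intro B hB hBfin
  obtain ⟨x, -, rfl⟩ := Ultrafilter.eq_pure_of_finite_mem hBfin hB
  obtain ⟨a, rfl, b, rfl, hab⟩ := hv {x} (mem_singleton x)
  exact hidem _ hA hab

end EndExtension

section CancelSemigroup

variable {S : Type*} [AddSemigroup S] {u : Ultrafilter S} {U E : Set S}

lemma add_ne_right_of_add_self_ne [IsRightCancelAdd S] {a : S} (ha : a + a ≠ a) (x : S) :
    a + x ≠ x := by
  intro h
  refine ha (add_right_cancel (b := x) ?_)
  rw [add_assoc, h, h]

variable [IsCancelAdd S]

lemma subsingleton_setOf_add_self_eq : {x : S | x + x = x}.Subsingleton := by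
  intro x hx y hy
  have hxy : x + y = y := add_left_cancel (a := x) (by rw [← add_assoc, hx])
  have hyx : x + y = x := add_right_cancel (b := y) (by rw [add_assoc, hy])
  exact hyx.symm.trans hxy

lemma IsFreeUltrafilter.exists_mem_forall_isSchurEndExtension (hu : IsFreeUltrafilter u)
    (hE : E.Finite) (hidem : ∀ a ∈ E, a + a ≠ a) :
    ∃ W ∈ u, ∀ F ⊆ W, IsSchurEndExtension E (E ∪ F) := by
  have hshift (a : S) (ha : a ∈ E) : ∃ A ∈ u, ∀ x ∈ A, a + x ∉ A :=
    exists_mem_ultrafilter_forall_apply_notMem u (add_right_injective a)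
      (add_ne_right_of_add_self_ne (hidem a ha))
  choose! A hAu hA using hshift
  have hnotsum : ∀ᶠ x in u, x ∉ image2 (· + ·) E E := hu.eventually_notMem (hE.image2 _ hE)
  have hnotdiff : ∀ᶠ x in u, ∀ a ∈ E, a + x ∉ E := (eventually_all_finite hE).2 fun a _ ↦
    hu.eventually_notMem (hE.preimage (add_right_injective a).injOn)
  have hshifted : ∀ᶠ x in u, ∀ a ∈ E, x ∈ A a := (eventually_all_finite hE).2 hAu
  refine ⟨_, hnotsum.and (hnotdiff.and hshifted), fun F hF ↦ ⟨subset_union_left, ?_⟩⟩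
  rintro a ha b (hb | hb) (hab | hab)
  · exact ⟨hb, hab⟩
  · exact absurd (mem_image2_of_mem ha hb) (hF hab).1
  · exact absurd hab ((hF hb).2.1 a ha)
  · exact absurd ((hF hab).2.2 a ha) (hA a ha b ((hF hb).2.2 a ha))

lemma IsSchurUltrafilter.exists_isSchurEndExtension_isPartitionSchur (hu : IsSchurUltrafilter u)
    (hfree : IsFreeUltrafilter u) (hU : U ∈ u) (hidem : ∀ x ∈ U, x + x ≠ x)
    (hE : E.Finite) (hEU : E ⊆ U) (r : ℕ) :
    ∃ F ⊆ U, F.Finite ∧ IsSchurEndExtension E F ∧ IsPartitionSchur (Fin r) F := by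
  obtain ⟨W, hW, hext⟩ :=
    hfree.exists_mem_forall_isSchurEndExtension hE fun a ha ↦ hidem a (hEU ha)
  obtain ⟨F, hFUW, hF, hFr⟩ :=
    (hu.isPartitionSchur (κ := Fin r) (inter_mem hU hW)).exists_finite_subset
  exact ⟨E ∪ F, union_subset hEU fun x hx ↦ (hFUW hx).1, hE.union hF,
    hext F fun x hx ↦ (hFUW hx).2, hFr.mono subset_union_right⟩

lemma IsSchurUltrafilter.exists_subset_isPartitionSchur_finite (hu : IsSchurUltrafilter u)
    (hfree : IsFreeUltrafilter u) (hU : U ∈ u) (hidem : ∀ x ∈ U, x + x ≠ x) :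
    ∃ V ⊆ U, (∀ r, IsPartitionSchur (Fin r) V) ∧ ∀ a ∈ V, {b ∈ V | a + b ∈ V}.Finite := by
  choose! next hsub hfin hext hschur using fun (E : Set S) (r : ℕ) (hE : E.Finite ∧ E ⊆ U) ↦
    hu.exists_isSchurEndExtension_isPartitionSchur hfree hU hidem hE.1 hE.2 r
  let E : ℕ → Set S := Nat.rec ∅ fun r E ↦ next E r
  have hE (n : ℕ) : (E n).Finite ∧ E n ⊆ U := by
    induction n with
    | zero => exact ⟨finite_empty, empty_subset U⟩
    | succ n ih => exact ⟨hfin (E n) n ih, hsub (E n) n ih⟩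
  refine ⟨⋃ n, E n, iUnion_subset fun n ↦ (hE n).2, fun r ↦ ?_, fun a ↦ ?_⟩
  · exact (hschur (E r) r (hE r)).mono (subset_iUnion E (r + 1))
  · exact finite_setOf_add_mem_iUnion (fun n ↦ (hE n).1) fun n ↦ hext (E n) n (hE n)

theorem IsSchurUltrafilter.exists_mem_not_isInfSchurUltrafilter (hu : IsSchurUltrafilter u)
    (hfree : IsFreeUltrafilter u) (hU : U ∈ u) :
    ∃ v : Ultrafilter S, IsFreeUltrafilter v ∧ IsSchurUltrafilter v ∧ U ∈ v ∧
      ¬ IsInfSchurUltrafilter v := by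
  have hidem : ∀ᶠ x : S in u, x + x ≠ x :=
    hfree.eventually_notMem subsingleton_setOf_add_self_eq.finite
  obtain ⟨V, hVU, hVschur, hVfin⟩ :=
    hu.exists_subset_isPartitionSchur_finite hfree (inter_mem hU hidem) fun x hx ↦ hx.2
  obtain ⟨v, hv, hVv⟩ := exists_isSchurUltrafilter_mem hVschur
  exact ⟨v, hv.isFreeUltrafilter hVv fun x hx ↦ (hVU hx).2, hv,
    mem_of_superset hVv fun x hx ↦ (hVU hx).1, not_isInfSchurUltrafilter_of_finite hVv hVfin⟩

end CancelSemigroup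

section Idempotent

attribute [local instance] Ultrafilter.add Ultrafilter.addSemigroup

lemma isSchurUltrafilter_of_add_self_eq {S : Type*} [Add S] {u : Ultrafilter S} (hu : u + u = u) :
    IsSchurUltrafilter u := by
  intro A hA
  have hmem : ∀ᶠ x in u, x ∈ A := hA
  have hadd : ∀ᶠ x in u, ∀ᶠ y in u, x + y ∈ A := by
    rwa [← Ultrafilter.eventually_add, hu]
  obtain ⟨a, ha, haA⟩ := (hmem.and hadd).exists
  obtain ⟨b, hb, hab⟩ := (hmem.and haA).exists
  exact ⟨a, ha, b, hb, hab⟩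

lemma IsFreeUltrafilter.add_left {S : Type*} [Add S] [IsLeftCancelAdd S] {v : Ultrafilter S}
    (hv : IsFreeUltrafilter v) (u : Ultrafilter S) : IsFreeUltrafilter (u + v) := by
  intro A hA hfin
  have hsum : ∀ᶠ x in u, ∀ᶠ y in v, x + y ∈ A := hA
  obtain ⟨x, hx⟩ := hsum.exists
  exact hv _ hx (hfin.preimage (add_right_injective x).injOn)

lemma exists_isFreeUltrafilter_isSchurUltrafilter (S : Type*) [AddSemigroup S]
    [IsLeftCancelAdd S] [Infinite S] :
    ∃ u : Ultrafilter S, IsFreeUltrafilter u ∧ IsSchurUltrafilter u := by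
  obtain ⟨u, hfree, hidem⟩ := exists_idempotent_in_compact_add_subsemigroup
    Ultrafilter.continuous_add_left {u : Ultrafilter S | IsFreeUltrafilter u}
    ⟨hyperfilter S, isFreeUltrafilter_iff_le_cofinite.2 hyperfilter_le_cofinite⟩
    isClosed_setOf_isFreeUltrafilter.isCompact fun u _ v hv ↦ hv.add_left u
  exact ⟨u, hfree, isSchurUltrafilter_of_add_self_eq hidem⟩

end Idempotent

theorem schFin_nonempty_and_dense_general {S : Type*} [AddSemigroup S] [IsCancelAdd S]
    [Infinite S] :
    (∃ u : Ultrafilter S, IsFreeUltrafilter u ∧ IsSchurUltrafilter u ∧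
      ¬ IsInfSchurUltrafilter u) ∧
    ∀ u : Ultrafilter S, IsFreeUltrafilter u → IsSchurUltrafilter u → ∀ U ∈ u,
      ∃ v : Ultrafilter S, IsFreeUltrafilter v ∧ IsSchurUltrafilter v ∧ U ∈ v ∧
        ¬ IsInfSchurUltrafilter v := by
  refine ⟨?_, fun u hfree hu U hU ↦ hu.exists_mem_not_isInfSchurUltrafilter hfree hU⟩
  obtain ⟨u, hfree, hu⟩ := exists_isFreeUltrafilter_isSchurUltrafilter S
  obtain ⟨v, hvfree, hv, -, hvinf⟩ := hu.exists_mem_not_isInfSchurUltrafilter hfree univ_mem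
  exact ⟨v, hvfree, hv, hvinf⟩

/-- The set of free Schur ultrafilters on `ℤ` which are not infinitary Schur is
nonempty; moreover, for every free Schur ultrafilter `u` on `ℤ` and every `U ∈ u`
there exists a free Schur ultrafilter `v` containing `U` which is not infinitary
Schur. -/
theorem schFin_nonempty_and_dense :
    (∃ u : Ultrafilter ℤ, IsFreeUltrafilter u ∧ IsSchurUltrafilter u ∧
      ¬ IsInfSchurUltrafilter u) ∧
    ∀ u : Ultrafilter ℤ, IsFreeUltrafilter u → IsSchurUltrafilter u → ∀ U ∈ u,
      ∃ v : Ultrafilter ℤ, IsFreeUltrafilter v ∧ IsSchurUltrafilter v ∧ U ∈ v ∧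
        ¬ IsInfSchurUltrafilter v :=
  schFin_nonempty_and_dense_general
end
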